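/- arXiv:1810.07840 — 2 statements merged into one kernel-verified Lean document; each statement's English description precedes it below -/
import Mathlib

section
/- Let μ ≥ 0, let Ω ⊆ ℝⁿ be open, f bounded and continuous, Q continuous and nonnegative. Let u be a viscosity solution in Ω of the one-phase free boundary problem |∇u|^μ Δu = f in Ω⁺(u), |∇u| = Q on F(u), and let v be a strict comparison subsolution of the same problem in Ω. If u ≥ v⁺ in Ω, then u > v⁺ on Ω⁺(v) ∪ F(v). -/
open Metric Set Filter
open scoped RealInnerProductSpace Topology

noncomputable section

abbrev E (n : ℕ) : Type := EuclideanSpace ℝ (Fin n)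

/-- Laplacian: trace of the second derivative. -/
def lap {n : ℕ} (φ : E n → ℝ) (x : E n) : ℝ :=
  ∑ i : Fin n, iteratedFDeriv ℝ 2 φ x ![EuclideanSpace.single i 1, EuclideanSpace.single i 1]

def TouchesBelow {n : ℕ} (u φ : E n → ℝ) (x₀ : E n) : Prop :=
  u x₀ = φ x₀ ∧ ∀ᶠ x in 𝓝 x₀, φ x ≤ u x

def TouchesAbove {n : ℕ} (u φ : E n → ℝ) (x₀ : E n) : Prop :=
  u x₀ = φ x₀ ∧ ∀ᶠ x in 𝓝 x₀, u x ≤ φ x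

def posSet {n : ℕ} (Ω : Set (E n)) (u : E n → ℝ) : Set (E n) := {x ∈ Ω | 0 < u x}

def freeBdry {n : ℕ} (Ω : Set (E n)) (u : E n → ℝ) : Set (E n) := frontier (posSet Ω u) ∩ Ω

/-- Viscosity solution of `|∇u|^μ Δu = f` in `Ω⁺(u)`, `|∇u| = Q` on `F(u)`. -/
def ViscSol {n : ℕ} (μ : ℝ) (Ω : Set (E n)) (f Q u : E n → ℝ) : Prop :=
  (∀ φ : E n → ℝ, ContDiff ℝ 2 φ → ∀ x₀ ∈ posSet Ω u,
      (TouchesBelow u φ x₀ → ‖gradient φ x₀‖ ^ μ * lap φ x₀ ≤ f x₀) ∧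
      (TouchesAbove u φ x₀ → f x₀ ≤ ‖gradient φ x₀‖ ^ μ * lap φ x₀)) ∧
  (∀ φ : E n → ℝ, ContDiff ℝ 2 φ → ∀ x₀ ∈ freeBdry Ω u, gradient φ x₀ ≠ 0 →
      (TouchesBelow u (fun x => max (φ x) 0) x₀ → ‖gradient φ x₀‖ ≤ Q x₀) ∧
      (TouchesAbove u (fun x => max (φ x) 0) x₀ → Q x₀ ≤ ‖gradient φ x₀‖))

/-- `S` is a `C^{1,β}` graph in `B`. -/
def IsC1GraphIn {n : ℕ} (β : ℝ) (S B : Set (E n)) : Prop :=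
  ∃ ν : E n, ‖ν‖ = 1 ∧
    ∃ g : ((ℝ ∙ ν)ᗮ : Submodule ℝ (E n)) → ℝ,
      Differentiable ℝ g ∧
      (∃ K : ℝ, ∀ y z : ((ℝ ∙ ν)ᗮ : Submodule ℝ (E n)),
        ‖gradient g y - gradient g z‖ ≤ K * ‖(y : E n) - (z : E n)‖ ^ β) ∧
      S ∩ B = {x ∈ B | ⟪x, ν⟫ = g (Submodule.orthogonalProjectionOnto (ℝ ∙ ν)ᗮ x)}


/-- Strict comparison subsolution of the one-phase free boundary problem. -/
def StrictCompSubsol {n : ℕ} (μ : ℝ) (Ω : Set (E n)) (f Q v : E n → ℝ) : Prop :=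
  ContinuousOn v Ω ∧
  ContDiffOn ℝ 2 v (closure (posSet Ω v)) ∧
  (∀ x ∈ posSet Ω v, f x < ‖gradient v x‖ ^ μ * lap v x) ∧
  (∀ x ∈ freeBdry Ω v, Q x < ‖gradient v x‖)

lemma aux1 (g : ℝ → ℝ) (a b T : ℝ) (hT0 : 0 < T)
    (hg0 : g 0 = 0) (hc : ContinuousOn g (Icc 0 T))
    (hd : ∀ t ∈ Ioo 0 T, ∃ g', HasDerivAt g g' t ∧ a - 2 * b * t ≤ g') :
    T * a - b * T ^ 2 ≤ g T := by
  have hm : MonotoneOn (fun t => g t - (t * a - b * t ^ 2)) (Icc 0 T) := by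
    apply monotoneOn_of_deriv_nonneg (convex_Icc 0 T)
    · exact hc.sub (by fun_prop)
    · rw [interior_Icc]
      intro t ht
      obtain ⟨g', h1, h2⟩ := hd t ht
      exact (h1.differentiableAt.sub (by fun_prop)).differentiableWithinAt
    · rw [interior_Icc]
      intro t ht
      obtain ⟨g', h1, h2⟩ := hd t ht
      have h3 : HasDerivAt (fun t => t * a - b * t ^ 2) (a - b * (2 * t)) t := by
        have := ((hasDerivAt_id t).mul_const a).sub ((hasDerivAt_pow 2 t).const_mul b)
        exact this.congr_deriv (by simp)
      rw [(h1.fun_sub h3).deriv]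
      linarith
  have := hm (left_mem_Icc.2 hT0.le) (right_mem_Icc.2 hT0.le) hT0.le
  simp [hg0] at this
  linarith

lemma aux2 (g : ℝ → ℝ) (a b : ℝ) (hb : 0 ≤ b) (hab : b < a)
    (hg0 : g 0 = 0) (hc : ContinuousOn g (Icc 0 1))
    (hpos : ∀ᶠ t in 𝓝[>] (0:ℝ), 0 < g t)
    (hd : ∀ t ∈ Ioo (0:ℝ) 1, 0 < g t → ∃ g', HasDerivAt g g' t ∧ a - 2 * b * t ≤ g') :
    a - b ≤ g 1 := by
  have key : ∀ T, 0 < T → T ≤ 1 → (∀ t ∈ Ioo 0 T, 0 < g t) → T * a - b * T ^ 2 ≤ g T := by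
    intro T h0 h1 h2
    apply aux1 g a b T h0 hg0 (hc.mono (Icc_subset_Icc_right h1))
    intro t ht
    exact hd t ⟨ht.1, ht.2.trans_le h1⟩ (h2 t ht)
  have hall : ∀ t ∈ Ioo (0:ℝ) 1, 0 < g t := by
    by_contra! hcon
    obtain ⟨s, hs, hgs⟩ := hcon
    obtain ⟨δ, hδ, hδp⟩ := mem_nhdsGT_iff_exists_Ioo_subset.1 hpos
    have hδ : (0:ℝ) < δ := hδ
    have hδs : δ ≤ s := by
      by_contra! hlt
      have : 0 < g s := hδp ⟨hs.1, hlt⟩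
      linarith
    have hcs : ContinuousOn g (Icc δ s) :=
      hc.mono (Icc_subset_Icc hδ.le hs.2.le)
    have hcomp : IsCompact (Icc δ s ∩ g ⁻¹' Iic 0) :=
      isCompact_Icc.of_isClosed_subset (hcs.preimage_isClosed_of_isClosed isClosed_Icc isClosed_Iic)
        inter_subset_left
    obtain ⟨T, ⟨hT1, hT2⟩, hT3⟩ := hcomp.exists_isLeast ⟨s, ⟨hδs, le_rfl⟩, hgs⟩
    have hT0 : 0 < T := hδ.trans_le hT1.1
    have hTl : T ≤ 1 := hT1.2.trans hs.2.le
    have := key T hT0 hTl (by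
      intro t ht
      by_contra! hneg
      rcases lt_or_ge t δ with h | h
      · have : 0 < g t := hδp ⟨ht.1, h⟩
        linarith
      · have := hT3 ⟨⟨h, ht.2.le.trans hT1.2⟩, hneg⟩
        linarith [ht.2])
    have hT2 : g T ≤ 0 := hT2
    have h5 : 0 < T * (a - b * T) := by
      apply mul_pos hT0
      nlinarith
    nlinarith
  have := key 1 one_pos le_rfl hall
  linarith

lemma isOpen_posSet {n : ℕ} {Ω : Set (E n)} (hΩ : IsOpen Ω) {v : E n → ℝ}
    (hv : ContinuousOn v Ω) : IsOpen (posSet Ω v) :=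
  hv.isOpen_inter_preimage hΩ isOpen_Ioi

/-- quadratic lower barrier at a free boundary point -/
lemma aux3 {n : ℕ} {Ω : Set (E n)} (hΩ : IsOpen Ω) {v : E n → ℝ}
    (hv : ContinuousOn v Ω) (x₀ : E n) (hx₀ : x₀ ∈ freeBdry Ω v)
    (h2 : ContDiffOn ℝ 2 v (closure (posSet Ω v)))
    (hdiff : DifferentiableAt ℝ v x₀) (hv0 : v x₀ = 0) :
    ∃ C : ℝ, ∀ᶠ x in 𝓝 x₀, 0 < fderiv ℝ v x₀ (x - x₀) - C * ‖x - x₀‖ ^ 2 →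
      fderiv ℝ v x₀ (x - x₀) - C * ‖x - x₀‖ ^ 2 ≤ v x := by
  have hP : IsOpen (posSet Ω v) := isOpen_posSet hΩ hv
  set D := fderiv ℝ v x₀ with hD
  have hx₀c : x₀ ∈ closure (posSet Ω v) := hx₀.1.1
  have h2' : ContDiffWithinAt ℝ (1 + 1) v (closure (posSet Ω v)) x₀ :=
    (h2 x₀ hx₀c).of_le (by norm_num)
  rw [contDiffWithinAt_succ_iff_hasFDerivWithinAt' (by simp)] at h2'
  obtain ⟨U, hU, -, -, f', hf', hf'1⟩ := h2'
  rw [insert_eq_of_mem hx₀c] at hU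
  have hx₀U : x₀ ∈ U := mem_of_mem_nhdsWithin hx₀c hU
  have hO := (hf'1.differentiableWithinAt (by simp)).isBigO_sub
  obtain ⟨C₀, hC₀pos, hC₀⟩ := hO.exists_pos
  have hL := hf' x₀ hx₀U
  have hev : ∀ᶠ y in 𝓝[closure (posSet Ω v)] x₀, y ∈ U ∧ ‖f' y - f' x₀‖ ≤ C₀ * ‖y - x₀‖ :=
    (show ∀ᶠ y in 𝓝[closure (posSet Ω v)] x₀, y ∈ U from hU).and hC₀.bound
  rw [eventually_nhdsWithin_iff] at hev
  obtain ⟨r, hr, hball⟩ := Metric.eventually_nhds_iff.1 (hev.and (hΩ.mem_nhds hx₀.2))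
  refine ⟨C₀, Metric.eventually_nhds_iff.2 ⟨r, hr, ?_⟩⟩
  intro x hx hpos
  set w := x - x₀ with hw
  have hwr : ‖w‖ < r := by rwa [hw, ← dist_eq_norm]
  have hdist : ∀ t ∈ Icc (0:ℝ) 1, dist (x₀ + t • w) x₀ < r := by
    intro t ht
    rw [dist_eq_norm, add_sub_cancel_left, norm_smul, Real.norm_of_nonneg ht.1]
    nlinarith [norm_nonneg w, ht.2]
  have hline : ∀ t : ℝ, HasDerivAt (fun t : ℝ => x₀ + t • w) w t := by
    intro t
    simpa using ((hasDerivAt_id t).smul_const w).const_add x₀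
  have hDw : 0 < D w := by
    have : 0 ≤ C₀ * ‖w‖ ^ 2 := by positivity
    linarith
  have hg0 : HasDerivAt (fun t : ℝ => v (x₀ + t • w)) (D w) 0 := by
    have h1 : HasFDerivAt v D (x₀ + (0:ℝ) • w) := by simpa using hdiff.hasFDerivAt
    exact h1.comp_hasDerivAt 0 (hline 0)
  have hgpos : ∀ᶠ t in 𝓝[>] (0:ℝ), 0 < v (x₀ + t • w) := by
    have h1 := hg0.tendsto_slope_zero_right
    filter_upwards [h1.eventually (lt_mem_nhds hDw), self_mem_nhdsWithin] with t h2 h3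
    have h3 : 0 < t := h3
    simp only [zero_add, zero_smul, add_zero, hv0, sub_zero, smul_eq_mul] at h2
    exact pos_of_mul_pos_right h2 (inv_pos.2 h3).le
  have hPmem : ∀ t ∈ Icc (0:ℝ) 1, 0 < v (x₀ + t • w) → x₀ + t • w ∈ posSet Ω v :=
    fun t ht h => ⟨(hball (hdist t ht)).2, h⟩
  have hLw : f' x₀ w = D w := by
    have hin : ∀ᶠ t in 𝓝[>] (0:ℝ), x₀ + t • w ∈ closure (posSet Ω v) := by
      filter_upwards [hgpos, Ioo_mem_nhdsGT one_pos] with t h1 h2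
      exact subset_closure (hPmem t ⟨h2.1.le, h2.2.le⟩ h1)
    obtain ⟨δ, hδ, hδp⟩ := mem_nhdsGT_iff_exists_Ioo_subset.1 hin
    have hδ : (0:ℝ) < δ := hδ
    have h1 : HasDerivWithinAt (fun t : ℝ => v (x₀ + t • w)) (f' x₀ w) (Ico 0 δ) 0 := by
      have h1 : HasFDerivWithinAt v (f' x₀) (closure (posSet Ω v)) (x₀ + (0:ℝ) • w) := by
        simpa using hL
      refine h1.comp_hasDerivWithinAt 0 (hline 0).hasDerivWithinAt ?_
      intro t ht
      rcases eq_or_lt_of_le ht.1 with h | h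
      · simpa [← h] using hx₀c
      · exact hδp ⟨h, ht.2⟩
    have hud : UniqueDiffWithinAt ℝ (Ico 0 δ) 0 :=
      uniqueDiffOn_Ico 0 δ 0 ⟨le_rfl, hδ⟩
    exact hud.eq_deriv _ h1 hg0.hasDerivWithinAt
  have hfin := aux2 (fun t : ℝ => v (x₀ + t • w)) (D w) (C₀ * ‖w‖ ^ 2) (by positivity)
    (by linarith) (by simpa using hv0) ?_ hgpos ?_
  · have hxe : x₀ + (1:ℝ) • w = x := by simp [hw]
    simpa only [hxe] using hfin
  · refine hv.comp (by fun_prop) fun t ht => (hball (hdist t ht)).2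
  · intro t ht htp
    have htI : t ∈ Icc (0:ℝ) 1 := ⟨ht.1.le, ht.2.le⟩
    have hy := hPmem t htI htp
    have hyc := subset_closure hy
    obtain ⟨hyU, hyb⟩ := (hball (hdist t htI)).1 hyc
    have hfd : HasFDerivAt v (f' (x₀ + t • w)) (x₀ + t • w) :=
      (hf' _ hyU).hasFDerivAt (mem_of_superset (hP.mem_nhds hy) subset_closure)
    refine ⟨f' (x₀ + t • w) w, hfd.comp_hasDerivAt t (hline t), ?_⟩
    rw [add_sub_cancel_left, norm_smul, Real.norm_of_nonneg ht.1.le] at hyb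
    have h3 := ((f' (x₀ + t • w) - f' x₀).le_of_opNorm_le hyb w)
    rw [sub_apply, hLw, Real.norm_eq_abs] at h3
    have h4 := (abs_le.1 h3).1
    have h5 : 0 ≤ C₀ * (t * ‖w‖) * ‖w‖ := by
      have := ht.1.le
      positivity
    nlinarith

lemma aux4 {n : ℕ} {v : E n → ℝ} {P : Set (E n)} (hP : IsOpen P) {x₀ : E n} (hx : x₀ ∈ P)
    (h : ContDiffOn ℝ 2 v P) : ∃ φ : E n → ℝ, ContDiff ℝ 2 φ ∧ φ =ᶠ[𝓝 x₀] v := by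
  obtain ⟨r, hr, hb⟩ := Metric.isOpen_iff.1 hP x₀ hx
  let χ : ContDiffBump x₀ := ⟨r / 4, r / 2, by positivity, by linarith⟩
  refine ⟨fun x => χ x * v x, ?_, ?_⟩
  · rw [contDiff_iff_contDiffAt]
    intro x
    by_cases hxP : x ∈ P
    · exact χ.contDiffAt.mul (h.contDiffAt (hP.mem_nhds hxP))
    · have : (fun x => χ x * v x) =ᶠ[𝓝 x] fun _ => 0 := by
        have hx2 : x ∉ tsupport χ := by
          rw [χ.tsupport_eq]
          intro hx3
          exact hxP (hb (closedBall_subset_ball (by show r / 2 < r; linarith) hx3))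
        filter_upwards [notMem_tsupport_iff_eventuallyEq.1 hx2] with y hy
        simp [hy]
      exact contDiffAt_const.congr_of_eventuallyEq this
  · filter_upwards [χ.eventuallyEq_one] with y hy
    simp [hy]

/-- Lemma 2.4: comparison principle. -/
theorem comparison_principle
    (n : ℕ) (μ : ℝ) (hμ : 0 ≤ μ) (Ω : Set (E n)) (hΩ : IsOpen Ω)
    (f Q u v : E n → ℝ)
    (hf_bdd : ∃ M : ℝ, ∀ x ∈ Ω, |f x| ≤ M)
    (hf_cont : ContinuousOn f Ω)
    (hQ_cont : ContinuousOn Q Ω)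
    (hQ_nonneg : ∀ x ∈ Ω, 0 ≤ Q x)
    (hu_cont : ContinuousOn u Ω)
    (hu_nonneg : ∀ x ∈ Ω, 0 ≤ u x)
    (hu : ViscSol μ Ω f Q u)
    (hv : StrictCompSubsol μ Ω f Q v)
    (h : ∀ x ∈ Ω, max (v x) 0 ≤ u x) :
    ∀ x ∈ posSet Ω v ∪ freeBdry Ω v, max (v x) 0 < u x := by
  obtain ⟨hvc, hv2, hvG1, hvG2⟩ := hv
  have hP := isOpen_posSet hΩ hvc
  have hPu := isOpen_posSet hΩ hu_cont
  have hsub : posSet Ω v ⊆ posSet Ω u := fun x hx =>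
    ⟨hx.1, hx.2.trans_le ((le_max_left _ _).trans (h x hx.1))⟩
  rintro x₀ (hx | hx)
  · by_contra! hcon
    have hv0 : max (v x₀) 0 = v x₀ := max_eq_left hx.2.le
    have heq : u x₀ = v x₀ := by
      have := h x₀ hx.1
      linarith
    obtain ⟨φ, hφ, hφv⟩ := aux4 hP hx (hv2.mono subset_closure)
    have h1 := (hu.1 φ hφ x₀ (hsub hx)).1 ⟨by rw [heq, hφv.eq_of_nhds], by
      filter_upwards [hφv, hΩ.mem_nhds hx.1] with y hy hyΩ
      rw [hy]
      exact (le_max_left _ _).trans (h y hyΩ)⟩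
    have h2 := hvG1 x₀ hx
    have h3 : lap φ x₀ = lap v x₀ := by
      unfold lap
      rw [(hφv.iteratedFDeriv ℝ 2).eq_of_nhds]
    rw [hφv.gradient_eq, h3] at h1
    linarith
  · have hgr := hvG2 x₀ hx
    have hQ := hQ_nonneg x₀ hx.2
    have hg0 : gradient v x₀ ≠ 0 := by
      intro h0
      rw [h0, norm_zero] at hgr
      linarith
    have hdiff : DifferentiableAt ℝ v x₀ := by
      by_contra hnd
      exact hg0 (gradient_eq_zero_of_not_differentiableAt hnd)
    have hle : v x₀ ≤ 0 := by
      by_contra! hpos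
      have : x₀ ∈ posSet Ω v := ⟨hx.2, hpos⟩
      exact hx.1.2 (hP.interior_eq.symm ▸ this)
    have hge : 0 ≤ v x₀ := by
      have hcw : ContinuousWithinAt v (posSet Ω v) x₀ :=
        hdiff.continuousAt.continuousWithinAt
      exact closure_minimal (s := v '' posSet Ω v) (t := Ici 0)
        (by rintro _ ⟨y, hy, rfl⟩; exact hy.2.le) isClosed_Ici (hcw.mem_closure_image hx.1.1)
    have hv0 : v x₀ = 0 := le_antisymm hle hge
    by_contra! hcon
    have hu0 : u x₀ = 0 := by
      rw [hv0, max_self] at hcon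
      exact le_antisymm hcon (hu_nonneg x₀ hx.2)
    obtain ⟨C, hC⟩ := aux3 hΩ hvc x₀ hx hv2 hdiff hv0
    set D := fderiv ℝ v x₀ with hD
    have hφ : ContDiff ℝ 2 (fun x => D (x - x₀) - C * ‖x - x₀‖ ^ 2) := by
      have h1 : ContDiff ℝ 2 (fun x : E n => x - x₀) := contDiff_id.sub contDiff_const
      exact (D.contDiff.comp h1).sub (contDiff_const.mul (h1.norm_sq ℝ))
    have hfd : HasFDerivAt (fun x => D (x - x₀) - C * ‖x - x₀‖ ^ 2) D x₀ := by
      have h1 : HasFDerivAt (fun x : E n => x - x₀) (ContinuousLinearMap.id ℝ (E n)) x₀ :=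
        (hasFDerivAt_id x₀).sub_const x₀
      have h2 := (D.hasFDerivAt.comp x₀ h1).sub (h1.norm_sq.const_mul C)
      exact h2.congr_fderiv (by ext y; simp)
    have hgeq : gradient (fun x => D (x - x₀) - C * ‖x - x₀‖ ^ 2) x₀ = gradient v x₀ := by
      unfold gradient
      rw [hfd.fderiv]
    have hF : x₀ ∈ freeBdry Ω u := by
      refine ⟨⟨closure_mono hsub hx.1.1, ?_⟩, hx.2⟩
      rw [hPu.interior_eq]
      intro h0
      have := h0.2
      linarith
    have h1 := (hu.2 _ hφ x₀ hF (by rw [hgeq]; exact hg0)).1 ⟨by simp [hu0], by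
      filter_upwards [hC, hΩ.mem_nhds hx.2] with y hy hyΩ
      have h3 := h y hyΩ
      rcases le_or_gt (D (y - x₀) - C * ‖y - x₀‖ ^ 2) 0 with h4 | h4
      · rw [max_eq_right h4]
        exact hu_nonneg y hyΩ
      · rw [max_eq_left h4.le]
        exact (hy h4).trans ((le_max_left _ _).trans h3)⟩
    rw [hgeq] at h1
    linarith
end
end

section
/- Let n ≥ 1, ε₀ > 0, C > 0, r̄ ∈ (0,1), let (ν_k)_{k≥0} be unit vectors in ℝⁿ with |ν_{k+1} − ν_k| ≤ C ε₀ 2^{−k} for all k ≥ 0, and let S ⊆ ℝⁿ be a set such that for every k ≥ 0 and every x ∈ S with |x| ≤ r̄^k one has |⟨x, ν_k⟩| ≤ ε₀ 2^{−k} r̄^k. Set γ = ln 2 / ln(1/r̄). Then the limit ν := lim_{k→∞} ν_k exists with |ν_k − ν| ≤ 2C ε₀ 2^{−k} for all k, and there is a constant C' depending only on C and r̄ such that |⟨x, ν⟩| ≤ C' ε₀ |x|^{1+γ} for every x ∈ S with 0 < |x| ≤ 1. -/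
open Metric Set Filter
open scoped RealInnerProductSpace Topology

noncomputable section

/-- abstract geometric lemma behind the `C^{1,γ}` decay.
Here `γ = ln 2 / ln(1/r̄)`, i.e. `2⁻¹ = r̄^γ`. -/
theorem geometric_decay_lemma (C rb : ℝ) (hC : 0 < C) (hrb : 0 < rb) (hrb1 : rb < 1) :
    ∃ C' : ℝ, 0 < C' ∧
      ∀ (n : ℕ), 1 ≤ n →
        ∀ (ε₀ : ℝ) (ν : ℕ → E n) (S : Set (E n)),
          0 < ε₀ →
          (∀ k : ℕ, ‖ν k‖ = 1) →
          (∀ k : ℕ, ‖ν (k + 1) - ν k‖ ≤ C * ε₀ / 2 ^ k) →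
          (∀ k : ℕ, ∀ x ∈ S, ‖x‖ ≤ rb ^ k → |⟪x, ν k⟫| ≤ ε₀ / 2 ^ k * rb ^ k) →
          ∃ νlim : E n,
            Tendsto ν atTop (𝓝 νlim) ∧
            (∀ k : ℕ, ‖ν k - νlim‖ ≤ 2 * C * ε₀ / 2 ^ k) ∧
            ∀ x ∈ S, 0 < ‖x‖ → ‖x‖ ≤ 1 →
              |⟪x, νlim⟫| ≤ C' * ε₀ * ‖x‖ ^ (1 + Real.log 2 / Real.log (1 / rb)) := by
  refine ⟨2 * (1 / rb + 2 * C), by positivity, ?_⟩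
  intro n _ ε₀ ν S hε _ hν hS
  have hd : ∀ k, dist (ν k) (ν (k + 1)) ≤ (2 * C * ε₀) / 2 / 2 ^ k := by
    intro k
    rw [dist_comm, dist_eq_norm]
    refine (hν k).trans (le_of_eq ?_)
    ring
  obtain ⟨a, ha⟩ := cauchySeq_tendsto_of_complete (cauchySeq_of_le_geometric_two hd)
  have hlim : ∀ k : ℕ, ‖ν k - a‖ ≤ 2 * C * ε₀ / 2 ^ k := by
    intro k
    rw [← dist_eq_norm]
    exact dist_le_of_le_geometric_two_of_tendsto hd ha k
  refine ⟨a, ha, hlim, ?_⟩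
  intro x hx hx0 hx1
  obtain ⟨k, hk1, hk2⟩ := exists_nat_pow_near_of_lt_one hx0 hx1 hrb hrb1
  have hlog : 0 < Real.log (1 / rb) := Real.log_pos (by rw [lt_div_iff₀ hrb]; linarith)
  set γ := Real.log 2 / Real.log (1 / rb) with hγ
  have hγ0 : 0 < γ := div_pos (Real.log_pos (by norm_num)) hlog
  have hrγ : rb ^ γ = 1 / 2 := by
    have h1 : Real.log rb * γ = - Real.log 2 := by
      have h2 : Real.log (1 / rb) = - Real.log rb := by rw [one_div, Real.log_inv]
      rw [hγ, h2]
      rw [h2] at hlog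
      have : Real.log rb ≠ 0 := (neg_pos.mp hlog).ne
      field_simp
    rw [Real.rpow_def_of_pos hrb, h1, Real.exp_neg, Real.exp_log (by norm_num)]
    norm_num
  have hpow : (1 / 2 : ℝ) ^ (k + 1) ≤ ‖x‖ ^ γ := by
    rw [← hrγ, ← Real.rpow_natCast, ← Real.rpow_mul hrb.le, mul_comm, Real.rpow_mul hrb.le,
      Real.rpow_natCast]
    exact Real.rpow_le_rpow (by positivity) hk1.le hγ0.le
  have hA := hS k x hx hk2
  have hB : |⟪x, ν k - a⟫| ≤ ‖x‖ * (2 * C * ε₀ / 2 ^ k) :=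
    (abs_real_inner_le_norm _ _).trans (mul_le_mul_of_nonneg_left (hlim k) hx0.le)
  have hsplit : ⟪x, a⟫ = ⟪x, ν k⟫ - ⟪x, ν k - a⟫ := by rw [inner_sub_right]; ring
  have hrk : rb ^ k ≤ ‖x‖ / rb := by
    rw [le_div_iff₀ hrb, ← pow_succ]; exact hk1.le
  have hk0 : 0 < ε₀ / 2 ^ k := by positivity
  have hpos : 0 ≤ 2 * (1 / rb + 2 * C) * ε₀ * ‖x‖ := by positivity
  rw [Real.rpow_add hx0, Real.rpow_one]
  calc |⟪x, a⟫| ≤ |⟪x, ν k⟫| + |⟪x, ν k - a⟫| := by rw [hsplit]; exact abs_sub _ _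
    _ ≤ ε₀ / 2 ^ k * (‖x‖ / rb) + ‖x‖ * (2 * C * ε₀ / 2 ^ k) :=
        add_le_add (hA.trans (mul_le_mul_of_nonneg_left hrk hk0.le)) hB
    _ = 2 * (1 / rb + 2 * C) * ε₀ * ‖x‖ * (1 / 2 : ℝ) ^ (k + 1) := by
        rw [one_div_pow, pow_succ]; field_simp
    _ ≤ 2 * (1 / rb + 2 * C) * ε₀ * ‖x‖ * ‖x‖ ^ γ := mul_le_mul_of_nonneg_left hpow hpos
    _ = _ := by ring
end
end
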